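/- arXiv:math/0703742 — 6 statements merged into one kernel-verified Lean document; each statement's English description precedes it below -/
import Mathlib

section
/- Let N, M ≥ 1, let A be a real N×N doubly stochastic matrix with spectral expansion λ(A) ≤ α, and let B₁, B₂ be real M×M doubly stochastic matrices with spectral expansions λ(B₁) ≤ β₁ and λ(B₂) ≤ β₂, where α, β₁, β₂ ∈ [0,1]. Let Ã be an NM×NM permutation matrix (indexed by pairs in [N]×[M]) satisfying P Ã P = A ⊗ ((1/M)J_M), where P = I_N ⊗ (1/M)J_M. Then the matrix Z = (I_N ⊗ B₂) Ã (I_N ⊗ B₁) has spectral expansion λ(Z) ≤ f(α, β₁, β₂), i.e., for every x ∈ ℝ^{NM} orthogonal to the all-ones vector, ‖Zx‖ ≤ f(α, β₁, β₂)·‖x‖. -/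
/-!
Write `x = a + x'` with `a = P x` the blockwise-constant part. Since `B₁` is doubly stochastic,
`(I ⊗ B₁) x = a + b` with `b = (I ⊗ B₁) x'` orthogonal to the range of `P` and `‖b‖ ≤ β₁ ‖x'‖`.
Put `w = Ã (a + b)` and `m = ‖P w‖`. The same splitting for `B₂` gives
`‖Z x‖² ≤ (1 - β₂²) m² + β₂² ‖a + b‖²`.

To bound `m`, pair `P w` with `w`: setting `h = Ãᵀ P w`, one has `‖h‖ = m` and
`m² = ⟨h, a⟩ + ⟨h, b⟩`. Let `γ` be the cosine of the angle between `h` and `a`. Then `|γ| ≤ α`, because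
`⟨h, a⟩ = ⟨P w, P Ã P x⟩` and `P Ã P = A ⊗ J/M`; and `⟨h, b⟩ ≤ √(1 - γ²) m ‖b‖`, because `b` is
orthogonal to `a`. Hence `m ≤ γ ‖a‖ + √(1 - γ²) ‖b‖` (`exists_cosine`).

It remains to see that `diag(1, β₂) · R · diag(1, β₁)`, with `R` the reflection with first row
`(γ, √(1 - γ²))`, has operator norm at most `f(α, β₁, β₂)`. Its singular values have product `β₁ β₂`
and squared sum `γ² (1 - β₁²)(1 - β₂²) + β₁² + β₂²`, so the larger one is `f(γ, β₁, β₂)`, which is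
increasing in `|γ|` (`planar_bound`).
-/

open Matrix Kronecker

/-- Euclidean norm of a real vector. -/
noncomputable def euclNorm {n : Type*} [Fintype n] (x : n → ℝ) : ℝ :=
  Real.sqrt (∑ i, x i ^ 2)

/-- A real square matrix is doubly stochastic if its entries are nonnegative and
each row sum and each column sum equals 1. -/
def IsDoublyStochastic {n : Type*} [Fintype n] (A : Matrix n n ℝ) : Prop :=
  (∀ i j, 0 ≤ A i j) ∧ (∀ i, ∑ j, A i j = 1) ∧ (∀ j, ∑ i, A i j = 1)

/-- A permutation matrix. -/
def IsPermMatrix {n : Type*} [DecidableEq n] (A : Matrix n n ℝ) : Prop :=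
  ∃ σ : Equiv.Perm n, ∀ p q, A p q = if p = σ q then 1 else 0

/-- The function f(α,β₁,β₂) bounding the spectral expansion of the generalized
zig-zag product. -/
noncomputable def fZZ (α β₁ β₂ : ℝ) : ℝ :=
  (1 / 2) * (Real.sqrt (α ^ 2 * (1 - β₁ ^ 2) * (1 - β₂ ^ 2) + (β₁ + β₂) ^ 2)
           + Real.sqrt (α ^ 2 * (1 - β₁ ^ 2) * (1 - β₂ ^ 2) + (β₁ - β₂) ^ 2))

/-- The M×M all-ones matrix J_M. -/
def onesMat (M : ℕ) : Matrix (Fin M) (Fin M) ℝ := Matrix.of fun _ _ => 1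

/-- P = I_N ⊗ (1/M)·J_M, the orthogonal projection onto blockwise-constant vectors. -/
noncomputable def projP (N M : ℕ) : Matrix (Fin N × Fin M) (Fin N × Fin M) ℝ :=
  (1 : Matrix (Fin N) (Fin N) ℝ) ⊗ₖ ((M : ℝ)⁻¹ • onesMat M)

/-- The blockwise-constant part x^∥ of a vector indexed by [N]×[M]. -/
noncomputable def blockPar {N M : ℕ} (x : Fin N × Fin M → ℝ) : Fin N × Fin M → ℝ :=
  fun p => (∑ j, x (p.1, j)) / M

/-- The part x^⊥ = x − x^∥ of a vector indexed by [N]×[M]. -/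
noncomputable def blockPerp {N M : ℕ} (x : Fin N × Fin M → ℝ) : Fin N × Fin M → ℝ :=
  x - blockPar x

/-! ### The planar problem -/

/-- The square of `fZZ` is at least half the trace `τ` of the Gram matrix of the associated 2×2
matrix with determinant `β₁ β₂`, and is a root of the characteristic polynomial of that Gram matrix. -/
lemma fZZ_sq_root {α β₁ β₂ τ : ℝ} (hβ₁ : β₁ ∈ Set.Icc (0 : ℝ) 1)
    (hβ₂ : β₂ ∈ Set.Icc (0 : ℝ) 1)
    (hτ : τ = α ^ 2 * (1 - β₁ ^ 2) * (1 - β₂ ^ 2) + β₁ ^ 2 + β₂ ^ 2) :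
    τ ≤ 2 * fZZ α β₁ β₂ ^ 2 ∧
      (fZZ α β₁ β₂ ^ 2) ^ 2 - τ * fZZ α β₁ β₂ ^ 2 + (β₁ * β₂) ^ 2 = 0 := by
  obtain ⟨h1, h1'⟩ := hβ₁
  obtain ⟨h2, h2'⟩ := hβ₂
  have e1 : 0 ≤ 1 - β₁ ^ 2 := by nlinarith
  have e2 : 0 ≤ 1 - β₂ ^ 2 := by nlinarith
  have e3 : 0 ≤ α ^ 2 * (1 - β₁ ^ 2) * (1 - β₂ ^ 2) := by positivity
  have hp := Real.sq_sqrt (x := α ^ 2 * (1 - β₁ ^ 2) * (1 - β₂ ^ 2) + (β₁ + β₂) ^ 2) (by positivity)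
  have hq := Real.sq_sqrt (x := α ^ 2 * (1 - β₁ ^ 2) * (1 - β₂ ^ 2) + (β₁ - β₂) ^ 2) (by positivity)
  have hp0 := Real.sqrt_nonneg (α ^ 2 * (1 - β₁ ^ 2) * (1 - β₂ ^ 2) + (β₁ + β₂) ^ 2)
  have hq0 := Real.sqrt_nonneg (α ^ 2 * (1 - β₁ ^ 2) * (1 - β₂ ^ 2) + (β₁ - β₂) ^ 2)
  unfold fZZ
  generalize √(α ^ 2 * (1 - β₁ ^ 2) * (1 - β₂ ^ 2) + (β₁ + β₂) ^ 2) = p at *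
  generalize √(α ^ 2 * (1 - β₁ ^ 2) * (1 - β₂ ^ 2) + (β₁ - β₂) ^ 2) = q at *
  have hp' : p ^ 2 = τ + 2 * (β₁ * β₂) := by rw [hp, hτ]; ring
  have hq' : q ^ 2 = τ - 2 * (β₁ * β₂) := by rw [hq, hτ]; ring
  have hF : (1 / 2 * (p + q)) ^ 2 = (τ + p * q) / 2 := by linear_combination (hp' + hq') / 4
  rw [hF]
  refine ⟨by nlinarith [mul_nonneg hp0 hq0], ?_⟩
  linear_combination (q ^ 2 * hp' + (τ + 2 * (β₁ * β₂)) * hq') / 4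

lemma fZZ_nonneg (α β₁ β₂ : ℝ) : 0 ≤ fZZ α β₁ β₂ := by unfold fZZ; positivity

lemma fZZ_mono {γ α β₁ β₂ : ℝ} (h : γ ^ 2 ≤ α ^ 2) (hβ₁ : β₁ ∈ Set.Icc (0 : ℝ) 1)
    (hβ₂ : β₂ ∈ Set.Icc (0 : ℝ) 1) : fZZ γ β₁ β₂ ≤ fZZ α β₁ β₂ := by
  obtain ⟨h1, h1'⟩ := hβ₁
  obtain ⟨h2, h2'⟩ := hβ₂
  have e1 : 0 ≤ 1 - β₁ ^ 2 := by nlinarith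
  have e2 : 0 ≤ 1 - β₂ ^ 2 := by nlinarith
  unfold fZZ
  gcongr

/-- The operator norm of `diag(1, β₂) · R · diag(1, β₁)` is at most `fZZ γ β₁ β₂`, where `R` is the
reflection with first row `(γ, δ)`. -/
lemma planar_bound {γ δ β₁ β₂ : ℝ} (hγ : γ ^ 2 + δ ^ 2 = 1) (hβ₁ : β₁ ∈ Set.Icc (0 : ℝ) 1)
    (hβ₂ : β₂ ∈ Set.Icc (0 : ℝ) 1) (s t : ℝ) :
    (γ * s + δ * (β₁ * t)) ^ 2 + β₂ ^ 2 * (δ * s - γ * (β₁ * t)) ^ 2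
      ≤ fZZ γ β₁ β₂ ^ 2 * (s ^ 2 + t ^ 2) := by
  obtain ⟨h1, h2⟩ := fZZ_sq_root (α := γ) hβ₁ hβ₂ rfl
  generalize fZZ γ β₁ β₂ ^ 2 = F at *
  have hδ : δ ^ 2 = 1 - γ ^ 2 := by linarith
  -- `X₁₁ = γ² + β₂² δ²`, `X₂₂ = β₁² (δ² + β₂² γ²)`, `X₁₂ = γ δ β₁ (1 - β₂²)` are the Gram entries;
  -- `F - X` has nonnegative trace and zero determinant.
  have hdet : (F - (γ ^ 2 + β₂ ^ 2 * δ ^ 2)) * (F - β₁ ^ 2 * (δ ^ 2 + β₂ ^ 2 * γ ^ 2))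
      = (γ * δ * β₁ * (1 - β₂ ^ 2)) ^ 2 := by
    have : (γ * δ * β₁ * (1 - β₂ ^ 2)) ^ 2 = γ ^ 2 * δ ^ 2 * (β₁ * (1 - β₂ ^ 2)) ^ 2 := by ring
    rw [this, hδ]
    linear_combination h2
  have htr : 0 ≤ (F - (γ ^ 2 + β₂ ^ 2 * δ ^ 2)) + (F - β₁ ^ 2 * (δ ^ 2 + β₂ ^ 2 * γ ^ 2)) := by
    rw [hδ]; nlinarith
  have key : ∀ X Y Z : ℝ, X * Y = Z ^ 2 → 0 ≤ X + Y →
      0 ≤ X * s ^ 2 + Y * t ^ 2 - 2 * Z * (s * t) := by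
    intro X Y Z hXY hsum
    rcases hsum.eq_or_lt with h0 | h0
    · have hY : Y = -X := by linarith
      subst hY
      have hX : X = 0 := by nlinarith [sq_nonneg X, sq_nonneg Z]
      subst hX
      have hZ : Z = 0 := by nlinarith [sq_nonneg Z]
      simp [hZ]
    · refine nonneg_of_mul_nonneg_right ?_ h0
      have : (X + Y) * (X * s ^ 2 + Y * t ^ 2 - 2 * Z * (s * t))
          = (X * s - Z * t) ^ 2 + (Z * s - Y * t) ^ 2 := by
        linear_combination (s ^ 2 + t ^ 2) * hXY
      rw [this]; positivity
  have := key _ _ _ hdet htr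
  linarith

/-- Here `m = ‖h‖`, `s = ‖a‖`, `c = ⟨h, a⟩`, while `k` and `l` are the norms of the components of `h`
inside and orthogonal to a subspace containing `a`; `γ` is the cosine of the angle between `h` and
`a` (taken to be `0` if one of them vanishes). -/
lemma exists_cosine {α m s c k l : ℝ} (hα : α ∈ Set.Icc (0 : ℝ) 1) (hm : 0 ≤ m) (hs : 0 ≤ s)
    (hkl : k ^ 2 + l ^ 2 = m ^ 2) (hck : c ^ 2 ≤ k ^ 2 * s ^ 2)
    (hc : c ^ 2 ≤ m ^ 2 * (α ^ 2 * s ^ 2)) :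
    ∃ γ δ : ℝ, γ ^ 2 + δ ^ 2 = 1 ∧ γ ^ 2 ≤ α ^ 2 ∧ 0 ≤ δ ∧ c = γ * m * s ∧ l ≤ δ * m := by
  rcases eq_or_ne (m * s) 0 with h0 | h0
  · refine ⟨0, 1, by norm_num, by simpa using sq_nonneg α, by norm_num, ?_, ?_⟩
    · have : m ^ 2 * (α ^ 2 * s ^ 2) = 0 := by
        rw [show m ^ 2 * (α ^ 2 * s ^ 2) = α ^ 2 * (m * s) ^ 2 by ring, h0]; ring
      have : c = 0 := by nlinarith [sq_nonneg c]
      simp [this]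
    · rw [one_mul]; exact abs_le_of_sq_le_sq' (by nlinarith [sq_nonneg k]) hm |>.2
  · have hpos : 0 < m * s := lt_of_le_of_ne (by positivity) h0.symm
    obtain ⟨hm0, hs0⟩ := mul_ne_zero_iff.1 h0
    obtain ⟨γ, hγ⟩ : ∃ γ, c = γ * m * s := ⟨c / (m * s), by field_simp⟩
    have hm2 : 0 < m ^ 2 := by positivity
    have hs2 : 0 < s ^ 2 := by positivity
    have hγα : γ ^ 2 ≤ α ^ 2 := by
      have : γ ^ 2 * (m ^ 2 * s ^ 2) ≤ α ^ 2 * (m ^ 2 * s ^ 2) := by rw [hγ] at hc; linarith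
      exact le_of_mul_le_mul_right this (by positivity)
    have hγk : γ ^ 2 * m ^ 2 ≤ k ^ 2 := by
      have : γ ^ 2 * m ^ 2 * s ^ 2 ≤ k ^ 2 * s ^ 2 := by rw [hγ] at hck; linarith
      exact le_of_mul_le_mul_right this hs2
    have h1 : 0 ≤ 1 - γ ^ 2 := by nlinarith [hα.1, hα.2]
    have hsq := Real.sq_sqrt h1
    refine ⟨γ, √(1 - γ ^ 2), by linarith, hγα, by positivity, hγ, ?_⟩
    refine (abs_le_of_sq_le_sq' ?_ (by positivity)).2
    rw [mul_pow, hsq]; linarith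

/-! ### Reduction to the planar problem -/

lemma euclNorm_sq {n : Type*} [Fintype n] (x : n → ℝ) : euclNorm x ^ 2 = x ⬝ᵥ x := by
  unfold euclNorm
  rw [Real.sq_sqrt (by positivity)]
  simp [dotProduct, sq]

lemma euclNorm_nonneg {n : Type*} [Fintype n] (x : n → ℝ) : 0 ≤ euclNorm x := Real.sqrt_nonneg _

lemma dot_sq_le {n : Type*} [Fintype n] (x y : n → ℝ) :
    (x ⬝ᵥ y) ^ 2 ≤ euclNorm x ^ 2 * euclNorm y ^ 2 := by
  rw [euclNorm_sq, euclNorm_sq]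
  simpa [dotProduct, sq] using Finset.sum_mul_sq_le_sq_mul_sq Finset.univ x y

lemma dot_le {n : Type*} [Fintype n] (x y : n → ℝ) : x ⬝ᵥ y ≤ euclNorm x * euclNorm y := by
  refine (abs_le_of_sq_le_sq' ?_ (mul_nonneg (euclNorm_nonneg x) (euclNorm_nonneg y))).2
  rw [mul_pow]; exact dot_sq_le x y

section
variable {n : Type*} [Fintype n]

/-- A symmetric matrix moves across the dot product. -/
lemma dot_mulVec_symm {P : Matrix n n ℝ} (hP : Pᵀ = P) (x y : n → ℝ) :
    x ⬝ᵥ (P *ᵥ y) = (P *ᵥ x) ⬝ᵥ y := by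
  rw [dotProduct_mulVec, ← mulVec_transpose, hP]

lemma euclNorm_add_sq {P : Matrix n n ℝ} (hP : Pᵀ = P) {a b : n → ℝ} (ha : P *ᵥ a = a)
    (hb : P *ᵥ b = 0) : euclNorm (a + b) ^ 2 = euclNorm a ^ 2 + euclNorm b ^ 2 := by
  have hab : a ⬝ᵥ b = 0 := by rw [← ha, ← dot_mulVec_symm hP, hb, dotProduct_zero]
  rw [euclNorm_sq, euclNorm_sq, euclNorm_sq, add_dotProduct, dotProduct_add, dotProduct_add,
    dotProduct_comm b a, hab]
  ring

/-- The norm bound for `B₂ U B₁`, for an arbitrary orthogonal projection `P` fixed by `B₁`, `B₂` on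
both sides and an arbitrary orthogonal matrix `U`. -/
lemma abstract_zigzag [DecidableEq n] {α β₁ β₂ : ℝ} (hα : α ∈ Set.Icc (0 : ℝ) 1)
    (hβ₁ : β₁ ∈ Set.Icc (0 : ℝ) 1) (hβ₂ : β₂ ∈ Set.Icc (0 : ℝ) 1)
    (P U B₁ B₂ : Matrix n n ℝ) (hP : Pᵀ = P) (hPP : P * P = P) (hU : Uᵀ * U = 1)
    (hB₁P : B₁ * P = P) (hPB₁ : P * B₁ = P) (hB₂P : B₂ * P = P) (hPB₂ : P * B₂ = P)
    (hB₁ : ∀ z, P *ᵥ z = 0 → euclNorm (B₁ *ᵥ z) ≤ β₁ * euclNorm z)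
    (hB₂ : ∀ z, P *ᵥ z = 0 → euclNorm (B₂ *ᵥ z) ≤ β₂ * euclNorm z)
    (x : n → ℝ) (hx : euclNorm (P *ᵥ U *ᵥ P *ᵥ x) ≤ α * euclNorm (P *ᵥ x)) :
    euclNorm (B₂ *ᵥ U *ᵥ B₁ *ᵥ x) ≤ fZZ α β₁ β₂ * euclNorm x := by
  have hPPv (z : n → ℝ) : P *ᵥ P *ᵥ z = P *ᵥ z := by rw [mulVec_mulVec, hPP]
  have hPsub (z : n → ℝ) : P *ᵥ (z - P *ᵥ z) = 0 := by rw [mulVec_sub, hPPv, sub_self]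
  have hsplit (z : n → ℝ) :
      euclNorm z ^ 2 = euclNorm (P *ᵥ z) ^ 2 + euclNorm (z - P *ᵥ z) ^ 2 := by
    rw [← euclNorm_add_sq hP (hPPv z) (hPsub z), add_sub_cancel]
  have hUnorm (V : Matrix n n ℝ) (hV : Vᵀ * V = 1) (z : n → ℝ) :
      euclNorm (V *ᵥ z) = euclNorm z := by
    rw [← sq_eq_sq₀ (euclNorm_nonneg _) (euclNorm_nonneg _), euclNorm_sq, euclNorm_sq,
      dotProduct_mulVec, ← mulVec_transpose, mulVec_mulVec, hV, one_mulVec]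
  have hU' : U * Uᵀ = 1 := mul_eq_one_comm.1 hU
  set a := P *ᵥ x with ha
  set x' := x - a with hx'
  set b := B₁ *ᵥ x' with hb
  have hPa : P *ᵥ a = a := hPPv x
  have hPb : P *ᵥ b = 0 := by rw [hb, mulVec_mulVec, hPB₁]; exact hPsub x
  have hu : B₁ *ᵥ x = a + b := by
    have : B₁ *ᵥ a = a := by rw [ha, mulVec_mulVec, hB₁P]
    rw [hb, hx', mulVec_sub, this, add_sub_cancel]
  rw [hu]
  set w := U *ᵥ (a + b) with hw
  set w' := w - P *ᵥ w with hw'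
  have hnw : euclNorm w ^ 2 = euclNorm a ^ 2 + euclNorm b ^ 2 := by
    rw [hw, hUnorm U hU, euclNorm_add_sq hP hPa hPb]
  have hZ : euclNorm (B₂ *ᵥ w) ^ 2 = euclNorm (P *ᵥ w) ^ 2 + euclNorm (B₂ *ᵥ w') ^ 2 := by
    have h1 : P *ᵥ B₂ *ᵥ w = P *ᵥ w := by rw [mulVec_mulVec, hPB₂]
    have h2 : B₂ *ᵥ w - P *ᵥ w = B₂ *ᵥ w' := by
      rw [hw', mulVec_sub, mulVec_mulVec _ B₂ P, hB₂P]
    rw [hsplit (B₂ *ᵥ w), h1, h2]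
  have hw'b := hB₂ w' (hPsub w)
  have hbb : euclNorm b ≤ β₁ * euclNorm x' := hB₁ x' (hPsub x)
  set h := Uᵀ *ᵥ P *ᵥ w with hh
  have hhm : euclNorm h = euclNorm (P *ᵥ w) := hUnorm _ (by rwa [transpose_transpose]) _
  have hhz (z : n → ℝ) : h ⬝ᵥ z = (P *ᵥ w) ⬝ᵥ (U *ᵥ z) := by
    rw [hh, mulVec_transpose, ← dotProduct_mulVec]
  have hm2 : euclNorm (P *ᵥ w) ^ 2 = h ⬝ᵥ a + h ⬝ᵥ b := by
    rw [← dotProduct_add, hhz, ← hw, euclNorm_sq, dot_mulVec_symm hP, hPPv]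
  have hca : h ⬝ᵥ a = (P *ᵥ w) ⬝ᵥ (P *ᵥ U *ᵥ a) := by
    rw [hhz, dot_mulVec_symm hP, hPPv]
  have hca' : h ⬝ᵥ a = (P *ᵥ h) ⬝ᵥ a := by rw [← dot_mulVec_symm hP, hPa]
  have hcb : h ⬝ᵥ b = (h - P *ᵥ h) ⬝ᵥ b := by
    rw [sub_dotProduct, ← dot_mulVec_symm hP, hPb, dotProduct_zero, sub_zero]
  obtain ⟨γ, δ, hγδ, hγα, hδ, hc, hl⟩ := exists_cosine (c := h ⬝ᵥ a) hα
    (euclNorm_nonneg (P *ᵥ w)) (euclNorm_nonneg a)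
    (k := euclNorm (P *ᵥ h)) (l := euclNorm (h - P *ᵥ h)) (by rw [← hsplit h, hhm]) (by rw [hca']; exact dot_sq_le _ _)
    (by
      rw [hca, ← mul_pow α]
      refine (dot_sq_le _ _).trans ?_
      have := euclNorm_nonneg (P *ᵥ U *ᵥ a)
      gcongr)
  have hcb' := dot_le (h - P *ᵥ h) b
  rw [← hcb] at hcb'
  have hxs := hsplit x
  have hws := hsplit w
  have hp := planar_bound hγδ hβ₁ hβ₂ (euclNorm a) (euclNorm x')
  have hmono := fZZ_mono hγα hβ₁ hβ₂
  have hf0 := fZZ_nonneg γ β₁ β₂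
  have na := euclNorm_nonneg a
  have nb := euclNorm_nonneg b
  have nw := euclNorm_nonneg (P *ᵥ w)
  have nx' := euclNorm_nonneg x'
  rw [← ha, ← hx'] at hxs
  rw [← hw'] at hws
  have hb2 : β₂ ^ 2 ≤ 1 := by nlinarith [hβ₂.1, hβ₂.2]
  have hw2 : euclNorm (B₂ *ᵥ w') ^ 2 ≤ β₂ ^ 2 * euclNorm w' ^ 2 := by
    rw [← mul_pow]; exact pow_le_pow_left₀ (euclNorm_nonneg _) hw'b 2
  have hbsq : euclNorm b ^ 2 ≤ (β₁ * euclNorm x') ^ 2 := pow_le_pow_left₀ nb hbb 2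
  have hm : euclNorm (P *ᵥ w) ≤ |γ * euclNorm a + δ * (β₁ * euclNorm x')| := by
    rcases nw.eq_or_lt with h0 | h0
    · rw [← h0]; exact abs_nonneg _
    · refine le_trans ?_ (le_abs_self _)
      refine le_of_mul_le_mul_right ?_ h0
      have h1 : h ⬝ᵥ b ≤ (δ * euclNorm (P *ᵥ w)) * (β₁ * euclNorm x') :=
        hcb'.trans (mul_le_mul hl hbb nb (by positivity))
      have h2 : euclNorm (P *ᵥ w) * euclNorm (P *ᵥ w)
          = γ * euclNorm (P *ᵥ w) * euclNorm a + h ⬝ᵥ b := by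
        rw [← sq, hm2, hc]
      linarith
  have hm2' := sq_le_sq.2 ((abs_of_nonneg nw).le.trans hm)
  have hsum : (γ * euclNorm a + δ * (β₁ * euclNorm x')) ^ 2
      + (δ * euclNorm a - γ * (β₁ * euclNorm x')) ^ 2
      = euclNorm a ^ 2 + (β₁ * euclNorm x') ^ 2 := by
    linear_combination (euclNorm a ^ 2 + (β₁ * euclNorm x') ^ 2) * hγδ
  have hfin : euclNorm (B₂ *ᵥ w) ^ 2 ≤ (fZZ γ β₁ β₂ * euclNorm x) ^ 2 := by
    rw [mul_pow, hxs]
    refine le_trans ?_ hp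
    rw [hZ]
    have e1 := mul_le_mul_of_nonneg_left hm2' (sub_nonneg.2 hb2)
    have e2 := mul_le_mul_of_nonneg_left hbsq (sq_nonneg β₂)
    have e3 : euclNorm w' ^ 2 = euclNorm a ^ 2 + euclNorm b ^ 2 - euclNorm (P *ᵥ w) ^ 2 := by
      linarith
    have e4 : (δ * euclNorm a - γ * (β₁ * euclNorm x')) ^ 2 = euclNorm a ^ 2
        + (β₁ * euclNorm x') ^ 2 - (γ * euclNorm a + δ * (β₁ * euclNorm x')) ^ 2 := by
      linarith
    rw [e3] at hw2
    rw [e4]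
    linarith
  have hnx := euclNorm_nonneg x
  exact (abs_le_of_sq_le_sq' hfin (by positivity)).2.trans (by gcongr)

end

/-! ### Block matrices and permutation matrices -/

section
variable {N M : ℕ}

lemma one_kron_mulVec (B : Matrix (Fin M) (Fin M) ℝ) (z : Fin N × Fin M → ℝ) (i : Fin N)
    (j : Fin M) : (((1 : Matrix (Fin N) (Fin N) ℝ) ⊗ₖ B) *ᵥ z) (i, j)
      = (B *ᵥ fun k => z (i, k)) j := by
  simp [mulVec, dotProduct, Fintype.sum_prod_type, one_apply, ite_mul, Finset.sum_ite_irrel]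

lemma kron_one_mulVec (A : Matrix (Fin N) (Fin N) ℝ) (z : Fin N × Fin M → ℝ) (i : Fin N)
    (j : Fin M) : ((A ⊗ₖ (1 : Matrix (Fin M) (Fin M) ℝ)) *ᵥ z) (i, j)
      = (A *ᵥ fun k => z (k, j)) i := by
  simp [mulVec, dotProduct, Fintype.sum_prod_type, one_apply]

lemma projP_mulVec (z : Fin N × Fin M → ℝ) (i : Fin N) (j : Fin M) :
    (projP N M *ᵥ z) (i, j) = (M : ℝ)⁻¹ * ∑ k, z (i, k) := by
  rw [projP, one_kron_mulVec]
  simp [mulVec, dotProduct, onesMat, Finset.mul_sum]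

lemma sq_le_of_euclNorm_le {n : Type*} [Fintype n] {β : ℝ} {y z : n → ℝ}
    (h : euclNorm y ≤ β * euclNorm z) : ∑ i, y i ^ 2 ≤ β ^ 2 * ∑ i, z i ^ 2 := by
  have := pow_le_pow_left₀ (euclNorm_nonneg _) h 2
  rw [mul_pow, euclNorm_sq, euclNorm_sq] at this
  simpa [dotProduct, sq] using this

lemma euclNorm_le_of_sq_le {n : Type*} [Fintype n] {β : ℝ} (hβ : 0 ≤ β) {y z : n → ℝ}
    (h : ∑ i, y i ^ 2 ≤ β ^ 2 * ∑ i, z i ^ 2) : euclNorm y ≤ β * euclNorm z := by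
  refine (abs_le_of_sq_le_sq' ?_ (mul_nonneg hβ (euclNorm_nonneg z))).2
  rw [mul_pow, euclNorm_sq, euclNorm_sq]
  simpa [dotProduct, sq] using h

/-- `I ⊗ B` contracts by `β` the vectors with zero sum in each block. -/
lemma one_kron_bound (hM : 1 ≤ M) {β : ℝ} (hβ : 0 ≤ β) {B : Matrix (Fin M) (Fin M) ℝ}
    (hB : ∀ v : Fin M → ℝ, ∑ k, v k = 0 → euclNorm (B.mulVec v) ≤ β * euclNorm v)
    (z : Fin N × Fin M → ℝ) (hz : projP N M *ᵥ z = 0) :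
    euclNorm (((1 : Matrix (Fin N) (Fin N) ℝ) ⊗ₖ B) *ᵥ z) ≤ β * euclNorm z := by
  refine euclNorm_le_of_sq_le hβ ?_
  rw [Fintype.sum_prod_type, Fintype.sum_prod_type, Finset.mul_sum]
  refine Finset.sum_le_sum fun i _ => ?_
  simp only [one_kron_mulVec]
  refine sq_le_of_euclNorm_le (hB _ ?_)
  have h := congrFun hz (i, ⟨0, hM⟩)
  rw [projP_mulVec] at h
  have hM0 : (M : ℝ)⁻¹ ≠ 0 := by positivity
  exact (mul_eq_zero.1 h).resolve_left hM0

/-- `A ⊗ I` contracts by `α` the vectors whose slices across the blocks have zero sum. -/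
lemma kron_one_bound {α : ℝ} (hα : 0 ≤ α) {A : Matrix (Fin N) (Fin N) ℝ}
    (hA : ∀ v : Fin N → ℝ, ∑ k, v k = 0 → euclNorm (A.mulVec v) ≤ α * euclNorm v)
    (z : Fin N × Fin M → ℝ) (hz : ∀ j, ∑ i, z (i, j) = 0) :
    euclNorm ((A ⊗ₖ (1 : Matrix (Fin M) (Fin M) ℝ)) *ᵥ z) ≤ α * euclNorm z := by
  refine euclNorm_le_of_sq_le hα ?_
  rw [Fintype.sum_prod_type_right, Fintype.sum_prod_type_right, Finset.mul_sum]
  refine Finset.sum_le_sum fun j _ => ?_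
  simp only [kron_one_mulVec]
  exact sq_le_of_euclNorm_le (hA _ (hz j))

lemma projP_transpose : (projP N M)ᵀ = projP N M := by
  ext ⟨i, j⟩ ⟨k, l⟩
  simp [projP, onesMat, one_apply, eq_comm]

lemma one_kron_mul_projP {B : Matrix (Fin M) (Fin M) ℝ} (hB : IsDoublyStochastic B) :
    ((1 : Matrix (Fin N) (Fin N) ℝ) ⊗ₖ B) * projP N M = projP N M := by
  rw [projP, ← mul_kronecker_mul, one_mul]
  congr 1
  ext i j
  simp [onesMat, mul_apply, hB.2.1, ← Finset.sum_mul]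

lemma projP_mul_one_kron {B : Matrix (Fin M) (Fin M) ℝ} (hB : IsDoublyStochastic B) :
    projP N M * ((1 : Matrix (Fin N) (Fin N) ℝ) ⊗ₖ B) = projP N M := by
  rw [projP, ← mul_kronecker_mul, one_mul]
  congr 1
  ext i j
  simp [onesMat, mul_apply, hB.2.2, ← Finset.mul_sum]

lemma projP_mul_self (hM : 1 ≤ M) : projP N M * projP N M = projP N M := by
  have hM0 : (M : ℝ) ≠ 0 := by positivity
  refine one_kron_mul_projP ⟨fun i j => ?_, fun i => ?_, fun j => ?_⟩ <;> simp [onesMat, hM0]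

end

lemma IsPermMatrix.transpose_mul_self {n : Type*} [Fintype n] [DecidableEq n] {U : Matrix n n ℝ}
    (h : IsPermMatrix U) : Uᵀ * U = 1 := by
  obtain ⟨σ, hσ⟩ := h
  ext p q
  simp [mul_apply, hσ, one_apply, eq_comm]

theorem generalized_zigzag_spectral_bound
    (N M : ℕ) (hN : 1 ≤ N) (hM : 1 ≤ M) (α β₁ β₂ : ℝ)
    (hα : α ∈ Set.Icc (0 : ℝ) 1) (hβ₁ : β₁ ∈ Set.Icc (0 : ℝ) 1) (hβ₂ : β₂ ∈ Set.Icc (0 : ℝ) 1)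
    (A : Matrix (Fin N) (Fin N) ℝ) (hA : IsDoublyStochastic A)
    (hAα : ∀ v : Fin N → ℝ, ∑ i, v i = 0 → euclNorm (A.mulVec v) ≤ α * euclNorm v)
    (B₁ B₂ : Matrix (Fin M) (Fin M) ℝ)
    (hB₁ : IsDoublyStochastic B₁) (hB₂ : IsDoublyStochastic B₂)
    (hB₁β : ∀ v : Fin M → ℝ, ∑ k, v k = 0 → euclNorm (B₁.mulVec v) ≤ β₁ * euclNorm v)
    (hB₂β : ∀ v : Fin M → ℝ, ∑ k, v k = 0 → euclNorm (B₂.mulVec v) ≤ β₂ * euclNorm v)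
    (Atil : Matrix (Fin N × Fin M) (Fin N × Fin M) ℝ) (hperm : IsPermMatrix Atil)
    (hrot : projP N M * Atil * projP N M = A ⊗ₖ ((M : ℝ)⁻¹ • onesMat M)) :
    ∀ x : Fin N × Fin M → ℝ, ∑ p, x p = 0 →
      euclNorm ((((1 : Matrix (Fin N) (Fin N) ℝ) ⊗ₖ B₂) * Atil
          * ((1 : Matrix (Fin N) (Fin N) ℝ) ⊗ₖ B₁)).mulVec x)
        ≤ fZZ α β₁ β₂ * euclNorm x := by
  intro x hx
  rw [← mulVec_mulVec, ← mulVec_mulVec]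
  refine abstract_zigzag hα hβ₁ hβ₂ (projP N M) Atil _ _ projP_transpose (projP_mul_self hM)
    hperm.transpose_mul_self (one_kron_mul_projP hB₁) (projP_mul_one_kron hB₁)
    (one_kron_mul_projP hB₂) (projP_mul_one_kron hB₂) (one_kron_bound hM hβ₁.1 hB₁β)
    (one_kron_bound hM hβ₂.1 hB₂β) x ?_
  have hfac : A ⊗ₖ ((M : ℝ)⁻¹ • onesMat M)
      = (A ⊗ₖ (1 : Matrix (Fin M) (Fin M) ℝ)) * projP N M := by
    rw [projP, ← mul_kronecker_mul, mul_one, one_mul]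
  rw [mulVec_mulVec, mulVec_mulVec, hrot, hfac, ← mulVec_mulVec]
  refine kron_one_bound hα.1 hAα _ fun j => ?_
  simp only [projP_mulVec]
  rw [← Finset.mul_sum, ← Fintype.sum_prod_type, hx, mul_zero]
end

section
/- For all α, β₁, β₂ ∈ [0,1], f(α, β₁, β₂) ≤ 1. -/
/-! At `α = 1` both radicands are perfect squares,
`(1 - β₁²)(1 - β₂²) + (β₁ ± β₂)² = (1 ± β₁β₂)²`, and the radicands increase with `α`.
Hence the two square roots are at most `1 + β₁β₂` and `1 - β₁β₂`, which sum to `2`. -/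

open Matrix Kronecker

theorem fZZ_le_one (α β₁ β₂ : ℝ)
    (hα : α ∈ Set.Icc (0 : ℝ) 1) (hβ₁ : β₁ ∈ Set.Icc (0 : ℝ) 1)
    (hβ₂ : β₂ ∈ Set.Icc (0 : ℝ) 1) :
    fZZ α β₁ β₂ ≤ 1 := by
  obtain ⟨hα0, hα1⟩ := hα
  obtain ⟨h10, h11⟩ := hβ₁
  obtain ⟨h20, h21⟩ := hβ₂
  have hα2 : α ^ 2 ≤ 1 := pow_le_one₀ hα0 hα1
  have h1 : 0 ≤ 1 - β₁ ^ 2 := sub_nonneg.2 (pow_le_one₀ h10 h11)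
  have h2 : 0 ≤ 1 - β₂ ^ 2 := sub_nonneg.2 (pow_le_one₀ h20 h21)
  have key : α ^ 2 * (1 - β₁ ^ 2) * (1 - β₂ ^ 2) ≤ (1 - β₁ ^ 2) * (1 - β₂ ^ 2) := by
    rw [mul_assoc]
    exact mul_le_of_le_one_left (mul_nonneg h1 h2) hα2
  have hp : 0 ≤ β₁ * β₂ := mul_nonneg h10 h20
  have hp1 : β₁ * β₂ ≤ 1 := mul_le_one₀ h11 h20 h21
  have hplus : Real.sqrt (α ^ 2 * (1 - β₁ ^ 2) * (1 - β₂ ^ 2) + (β₁ + β₂) ^ 2)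
      ≤ 1 + β₁ * β₂ :=
    Real.sqrt_le_iff.2 ⟨by linarith, by linarith⟩
  have hminus : Real.sqrt (α ^ 2 * (1 - β₁ ^ 2) * (1 - β₂ ^ 2) + (β₁ - β₂) ^ 2)
      ≤ 1 - β₁ * β₂ :=
    Real.sqrt_le_iff.2 ⟨by linarith, by linarith⟩
  unfold fZZ
  linarith
end

section
/- For all α, β₁, β₂ ∈ [0,1], f(α, β₁, β₂) = 1 if and only if (1−α)(1−β₁)(1−β₂) = 0. -/
/-! For `α = 1` the radicands are the perfect squares `(1 ± β₁β₂)²`, so the value is `1`; it is also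
`1` when `β₁ = 1` or `β₂ = 1`, because then `α` is multiplied by `0`. When `α, β₁, β₂ < 1` the
coefficient `(1 - β₁²)(1 - β₂²)` is positive, so both radicands are strictly smaller than for
`α = 1`, and the value is strictly below `1`. -/

open Matrix Kronecker

theorem fZZ_eq_one_iff (α β₁ β₂ : ℝ)
    (hα : α ∈ Set.Icc (0 : ℝ) 1) (hβ₁ : β₁ ∈ Set.Icc (0 : ℝ) 1)
    (hβ₂ : β₂ ∈ Set.Icc (0 : ℝ) 1) :
    fZZ α β₁ β₂ = 1 ↔ (1 - α) * (1 - β₁) * (1 - β₂) = 0 := by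
  obtain ⟨hα0, hα1⟩ := hα
  obtain ⟨h10, h11⟩ := hβ₁
  obtain ⟨h20, h21⟩ := hβ₂
  have hm0 : 0 ≤ β₁ * β₂ := mul_nonneg h10 h20
  have hm1 : β₁ * β₂ ≤ 1 := mul_le_one₀ h11 h20 h21
  unfold fZZ
  constructor
  · intro h
    by_contra hne
    have hα : α < 1 := lt_of_le_of_ne hα1 (by rintro rfl; simp at hne)
    have hβ₁ : β₁ < 1 := lt_of_le_of_ne h11 (by rintro rfl; simp at hne)
    have hβ₂ : β₂ < 1 := lt_of_le_of_ne h21 (by rintro rfl; simp at hne)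
    have hc : 0 < (1 - β₁ ^ 2) * (1 - β₂ ^ 2) :=
      mul_pos (by nlinarith) (by nlinarith)
    have hlt : α ^ 2 * (1 - β₁ ^ 2) * (1 - β₂ ^ 2) < (1 - β₁ ^ 2) * (1 - β₂ ^ 2) := by
      rw [mul_assoc]
      exact mul_lt_of_lt_one_left hc (by nlinarith)
    have hm : β₁ * β₂ < 1 := by nlinarith
    have hplus : √(α ^ 2 * (1 - β₁ ^ 2) * (1 - β₂ ^ 2) + (β₁ + β₂) ^ 2) < 1 + β₁ * β₂ := by
      rw [Real.sqrt_lt' (by linarith)]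
      linarith
    have hminus : √(α ^ 2 * (1 - β₁ ^ 2) * (1 - β₂ ^ 2) + (β₁ - β₂) ^ 2) < 1 - β₁ * β₂ := by
      rw [Real.sqrt_lt' (by linarith)]
      linarith
    linarith
  · intro h
    -- The difference of the two sides is a multiple of `(1 - α)(1 - β₁)(1 - β₂)`.
    have hc : α ^ 2 * (1 - β₁ ^ 2) * (1 - β₂ ^ 2) = (1 - β₁ ^ 2) * (1 - β₂ ^ 2) := by
      linear_combination -(1 + α) * (1 + β₁) * (1 + β₂) * h
    have hplus : (1 - β₁ ^ 2) * (1 - β₂ ^ 2) + (β₁ + β₂) ^ 2 = (1 + β₁ * β₂) ^ 2 := by ring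
    have hminus : (1 - β₁ ^ 2) * (1 - β₂ ^ 2) + (β₁ - β₂) ^ 2 = (1 - β₁ * β₂) ^ 2 := by ring
    rw [hc, hplus, hminus, Real.sqrt_sq (by linarith), Real.sqrt_sq (by linarith)]
    ring
end

section
/- Let N ≥ 2 and M ≥ 1, let B be a real M×M doubly stochastic matrix, and let Ã be an NM×NM permutation matrix (indexed by pairs in [N]×[M]). Then the matrix Z′ = Ã (I_N ⊗ B) has spectral expansion exactly 1: ‖Z′x‖ ≤ ‖x‖ for every x orthogonal to the all-ones vector 𝟙_{NM}, and there exists a nonzero x orthogonal to 𝟙_{NM} with ‖Z′x‖ = ‖x‖. -/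
/-!
Every block of `I_N ⊗ B` contracts the Euclidean norm: by Jensen's inequality the square of a row
average is at most the row average of the squares, and summing over the rows uses that the columns
of `B` sum to one. A permutation matrix only reorders coordinates, so `Ã (I_N ⊗ B)` is a
contraction. Equality is attained at a blockwise-constant vector: `I_N ⊗ B` fixes it because the
rows of `B` sum to one, and since `N ≥ 2` its block values can be chosen to sum to zero without
all vanishing, namely `1` on block `0`, `-1` on block `1` and `0` elsewhere.
-/

open Matrix Kronecker

theorem euclNorm_perm_mulVec {n : Type*} [Fintype n] [DecidableEq n] {A : Matrix n n ℝ}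
    (hA : IsPermMatrix A) (y : n → ℝ) : euclNorm (A.mulVec y) = euclNorm y := by
  obtain ⟨σ, hσ⟩ := hA
  have h : ∀ q, A.mulVec y (σ q) = y q := by
    intro q
    simp [Matrix.mulVec, dotProduct, hσ]
  unfold euclNorm
  rw [← Equiv.sum_comp σ]
  simp only [h]

theorem one_kronecker_mulVec_apply {N M : ℕ} (B : Matrix (Fin M) (Fin M) ℝ)
    (x : Fin N × Fin M → ℝ) (i : Fin N) (j : Fin M) :
    ((1 : Matrix (Fin N) (Fin N) ℝ) ⊗ₖ B).mulVec x (i, j) = ∑ k, B j k * x (i, k) := by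
  simp [Matrix.mulVec, dotProduct, Fintype.sum_prod_type, Matrix.one_apply, ite_mul,
    Finset.sum_ite_irrel]

/-- A doubly stochastic matrix contracts the sum of squares, by Jensen's inequality in each row. -/
theorem IsDoublyStochastic.sum_sq_le {n : Type*} [Fintype n] {B : Matrix n n ℝ}
    (hB : IsDoublyStochastic B) (y : n → ℝ) :
    ∑ j, (∑ k, B j k * y k) ^ 2 ≤ ∑ k, y k ^ 2 := by
  obtain ⟨h0, hrow, hcol⟩ := hB
  calc ∑ j, (∑ k, B j k * y k) ^ 2 ≤ ∑ j, ∑ k, B j k * y k ^ 2 :=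
        Finset.sum_le_sum fun j _ =>
          Real.pow_arith_mean_le_arith_mean_pow_of_even Finset.univ (B j) y
            (fun k _ => h0 j k) (hrow j) even_two
    _ = ∑ k, y k ^ 2 := by
        rw [Finset.sum_comm]
        simp only [← Finset.sum_mul, hcol, one_mul]

theorem reduced_zigzag_spectral_expansion_eq_one
    (N M : ℕ) (hN : 2 ≤ N) (hM : 1 ≤ M)
    (B : Matrix (Fin M) (Fin M) ℝ) (hB : IsDoublyStochastic B)
    (Atil : Matrix (Fin N × Fin M) (Fin N × Fin M) ℝ) (hperm : IsPermMatrix Atil) :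
    (∀ x : Fin N × Fin M → ℝ, ∑ p, x p = 0 →
        euclNorm ((Atil * ((1 : Matrix (Fin N) (Fin N) ℝ) ⊗ₖ B)).mulVec x) ≤ euclNorm x) ∧
    (∃ x : Fin N × Fin M → ℝ, x ≠ 0 ∧ ∑ p, x p = 0 ∧
        euclNorm ((Atil * ((1 : Matrix (Fin N) (Fin N) ℝ) ⊗ₖ B)).mulVec x) = euclNorm x) := by
  simp only [← Matrix.mulVec_mulVec, euclNorm_perm_mulVec hperm]
  constructor
  · intro x _
    refine Real.sqrt_le_sqrt ?_
    rw [Fintype.sum_prod_type, Fintype.sum_prod_type]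
    simp only [one_kronecker_mulVec_apply]
    exact Finset.sum_le_sum fun i _ => hB.sum_sq_le fun k => x (i, k)
  · let a : Fin N := ⟨0, by omega⟩
    let b : Fin N := ⟨1, by omega⟩
    have hab : a ≠ b := by simp [a, b]
    let c : Fin N → ℝ := fun i => (if i = a then 1 else 0) - (if i = b then 1 else 0)
    refine ⟨fun p => c p.1, ?_, ?_, ?_⟩
    · intro h
      have h1 := congrFun h (a, ⟨0, hM⟩)
      simp [c, hab] at h1
    · rw [Fintype.sum_prod_type]
      simp [c]
    · congr 1
      ext ⟨i, j⟩
      rw [one_kronecker_mulVec_apply]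
      dsimp only
      rw [← Finset.sum_mul, hB.2.1 j, one_mul]
end

section
/- Let α, β₁, β₂ ∈ [0,1]. Then for all real s, t ≥ 0: (α² + β₂² − α²β₂²)·s² + (β₁² − α²β₁² + α²β₁²β₂²)·t² + 2αβ₁√(1−α²)·(1−β₂²)·s·t ≤ f(α,β₁,β₂)²·(s² + t²). -/
/-!
The left-hand side is the quadratic form of a symmetric matrix `[[A, B], [B, C]]` with trace
`T = α²(1 - β₁²)(1 - β₂²) + β₁² + β₂²` and determinant `(β₁β₂)²`. Writing `P = √(T + 2β₁β₂)` and
`Q = √(T - 2β₁β₂)`, the numbers `f = (P + Q)/2` and `g = (P - Q)/2` satisfy `f² + g² = T` and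
`fg = β₁β₂`, so `f²` and `g²` are the eigenvalues, and `f² ≥ g²`. Hence `f² I - [[A, B], [B, C]]`
has determinant zero and nonnegative trace, so it is positive semidefinite
(`two_mul_mul_le_of_mul_eq_sq`).
-/

open Matrix Kronecker

/-- A symmetric `2 × 2` matrix `[[X, -B], [-B, Y]]` with zero determinant and nonnegative trace
is positive semidefinite. -/
lemma two_mul_mul_le_of_mul_eq_sq {X Y B : ℝ} (htr : 0 ≤ X + Y) (hdet : X * Y = B ^ 2)
    (s t : ℝ) : 2 * B * s * t ≤ X * s ^ 2 + Y * t ^ 2 := by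
  rcases htr.eq_or_lt with h | h
  · have hY : Y = -X := by linarith
    subst hY
    have hX : X = 0 := by nlinarith [sq_nonneg X, sq_nonneg B]
    have hB : B = 0 := by
      subst hX
      exact pow_eq_zero_iff (two_ne_zero) |>.mp (by linarith)
    simp [hX, hB]
  · -- A singular symmetric matrix squares to its trace times itself.
    have key : (X + Y) * (X * s ^ 2 + Y * t ^ 2 - 2 * B * s * t)
        = (X * s - B * t) ^ 2 + (B * s - Y * t) ^ 2 := by
      linear_combination (s ^ 2 + t ^ 2) * hdet
    have : 0 ≤ X * s ^ 2 + Y * t ^ 2 - 2 * B * s * t :=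
      nonneg_of_mul_nonneg_right (key ▸ by positivity) h
    linarith

theorem quadratic_form_max_bound (α β₁ β₂ : ℝ)
    (hα : α ∈ Set.Icc (0 : ℝ) 1) (hβ₁ : β₁ ∈ Set.Icc (0 : ℝ) 1)
    (hβ₂ : β₂ ∈ Set.Icc (0 : ℝ) 1) (s t : ℝ) (hs : 0 ≤ s) (ht : 0 ≤ t) :
    (α ^ 2 + β₂ ^ 2 - α ^ 2 * β₂ ^ 2) * s ^ 2
      + (β₁ ^ 2 - α ^ 2 * β₁ ^ 2 + α ^ 2 * β₁ ^ 2 * β₂ ^ 2) * t ^ 2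
      + 2 * α * β₁ * Real.sqrt (1 - α ^ 2) * (1 - β₂ ^ 2) * s * t
      ≤ fZZ α β₁ β₂ ^ 2 * (s ^ 2 + t ^ 2) := by
  obtain ⟨hα0, hα1⟩ := hα
  obtain ⟨hb10, hb11⟩ := hβ₁
  obtain ⟨hb20, hb21⟩ := hβ₂
  have ha : 0 ≤ 1 - α ^ 2 := by nlinarith
  have h1 : 0 ≤ 1 - β₁ ^ 2 := by nlinarith
  have h2 : 0 ≤ 1 - β₂ ^ 2 := by nlinarith
  have hP2 := Real.sq_sqrt
    (show 0 ≤ α ^ 2 * (1 - β₁ ^ 2) * (1 - β₂ ^ 2) + (β₁ + β₂) ^ 2 by positivity)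
  have hQ2 := Real.sq_sqrt
    (show 0 ≤ α ^ 2 * (1 - β₁ ^ 2) * (1 - β₂ ^ 2) + (β₁ - β₂) ^ 2 by positivity)
  have hP0 := Real.sqrt_nonneg (α ^ 2 * (1 - β₁ ^ 2) * (1 - β₂ ^ 2) + (β₁ + β₂) ^ 2)
  have hQ0 := Real.sqrt_nonneg (α ^ 2 * (1 - β₁ ^ 2) * (1 - β₂ ^ 2) + (β₁ - β₂) ^ 2)
  have hw := Real.sq_sqrt ha
  unfold fZZ
  set P := Real.sqrt (α ^ 2 * (1 - β₁ ^ 2) * (1 - β₂ ^ 2) + (β₁ + β₂) ^ 2)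
  set Q := Real.sqrt (α ^ 2 * (1 - β₁ ^ 2) * (1 - β₂ ^ 2) + (β₁ - β₂) ^ 2)
  set w := Real.sqrt (1 - α ^ 2)
  obtain ⟨f, hf⟩ : ∃ f, f = 1 / 2 * (P + Q) := ⟨_, rfl⟩
  obtain ⟨g, hg⟩ : ∃ g, g = 1 / 2 * (P - Q) := ⟨_, rfl⟩
  rw [← hf]
  have hsum : f ^ 2 + g ^ 2
      = α ^ 2 * (1 - β₁ ^ 2) * (1 - β₂ ^ 2) + β₁ ^ 2 + β₂ ^ 2 := by
    rw [hf, hg]; linear_combination (1 / 2) * hP2 + (1 / 2) * hQ2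
  have hprod : f * g = β₁ * β₂ := by
    rw [hf, hg]; linear_combination (1 / 4) * hP2 - (1 / 4) * hQ2
  have hfg : f ^ 2 - g ^ 2 = P * Q := by rw [hf, hg]; ring
  have hPQ : 0 ≤ P * Q := mul_nonneg hP0 hQ0
  have hform := two_mul_mul_le_of_mul_eq_sq
    (X := f ^ 2 - (α ^ 2 + β₂ ^ 2 - α ^ 2 * β₂ ^ 2))
    (Y := f ^ 2 - (β₁ ^ 2 - α ^ 2 * β₁ ^ 2 + α ^ 2 * β₁ ^ 2 * β₂ ^ 2))
    (B := α * β₁ * w * (1 - β₂ ^ 2)) (by linarith)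
    (by
      -- `f²` is a root of the characteristic polynomial `λ² - Tλ + (β₁β₂)²`.
      linear_combination f ^ 2 * hsum - (f * g + β₁ * β₂) * hprod
        - (α * β₁ * (1 - β₂ ^ 2)) ^ 2 * hw) s t
  linarith
end

section
/- For all α, β₁, β₂ ∈ [0,1], (1−β₁²)·α² + β₁² ≤ f(α,β₁,β₂)². -/
/-!
Put `a = β₁`, `b = β₂`, `A = α²(1-a²)(1-b²)`, `S = A + a² + b²` and `T = (1-a²)α² + a²`.
Squaring, `4 f² = 2 S + 2 √(S² - 4a²b²)`, so the claim `T ≤ f²` reads `2T - S ≤ √(S² - 4a²b²)`.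
This follows from `(2T - S)² ≤ S² - 4a²b²`, i.e. from `a²b² ≤ T (S - T)`. With `u = α²(1-a²)` one has
`S - T = b²(1-u)` and `T = u + a²`, whence `T (S - T) - a²b² = b² u (1-a²)(1-α²) ≥ 0`.
-/

open Matrix Kronecker

theorem case2_bound (α β₁ β₂ : ℝ)
    (hα : α ∈ Set.Icc (0 : ℝ) 1) (hβ₁ : β₁ ∈ Set.Icc (0 : ℝ) 1)
    (hβ₂ : β₂ ∈ Set.Icc (0 : ℝ) 1) :
    (1 - β₁ ^ 2) * α ^ 2 + β₁ ^ 2 ≤ fZZ α β₁ β₂ ^ 2 := by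
  obtain ⟨hα0, hα1⟩ := hα
  obtain ⟨ha0, ha1⟩ := hβ₁
  obtain ⟨hb0, hb1⟩ := hβ₂
  have hα2 : 0 ≤ 1 - α ^ 2 := by nlinarith
  have ha2 : 0 ≤ 1 - β₁ ^ 2 := by nlinarith
  have hb2 : 0 ≤ 1 - β₂ ^ 2 := by nlinarith
  unfold fZZ
  have hA : 0 ≤ α ^ 2 * (1 - β₁ ^ 2) * (1 - β₂ ^ 2) := by positivity
  set A := α ^ 2 * (1 - β₁ ^ 2) * (1 - β₂ ^ 2) with hAdef
  have hp : 0 ≤ A + (β₁ + β₂) ^ 2 := by positivity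
  have hm : 0 ≤ A + (β₁ - β₂) ^ 2 := by positivity
  have hsp := Real.sq_sqrt hp
  have hsm := Real.sq_sqrt hm
  -- The expression `β₂² u (1 - β₁²)(1 - α²)`, with `u = α²(1 - β₁²)`, is the slack `T (S - T) - β₁² β₂²`.
  have key : 0 ≤ β₂ ^ 2 * (α ^ 2 * (1 - β₁ ^ 2)) * (1 - β₁ ^ 2) * (1 - α ^ 2) := by positivity
  have hle : 2 * ((1 - β₁ ^ 2) * α ^ 2 + β₁ ^ 2) - (A + β₁ ^ 2 + β₂ ^ 2)
      ≤ √(A + (β₁ + β₂) ^ 2) * √(A + (β₁ - β₂) ^ 2) := by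
    rw [← Real.sqrt_mul hp]
    apply Real.le_sqrt_of_sq_le
    rw [hAdef]
    linear_combination 4 * key
  linear_combination (1 / 2) * hle - (1 / 4) * hsp - (1 / 4) * hsm
end
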